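/- Let (X, f_{1,∞}) be an NDS. Then (X, f_{1,∞}) is strongly multi-transitive if and only if for every k ∈ ℕ the product NDS (X^k, f_{1,∞} × f_{1,∞}^{[2]} × ⋯ × f_{1,∞}^{[k]}) is weakly mixing of all orders. -/

import Mathlib

open Set Filter

section NDSDefs

variable {X : Type*}

/-- `nComp f i n` is the composition `f (i+n-1) ∘ ⋯ ∘ f (i+1) ∘ f i`.
Here `f` is the 0-indexed sequence of maps of the NDS (so `f 0` is the paper's `f₁`),
and `nComp f 0 n` is the paper's `f₁ⁿ`. -/
def nComp (f : ℕ → X → X) (i : ℕ) : ℕ → X → X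
  | 0 => id
  | n + 1 => f (i + n) ∘ nComp f i n

/-- The `k`-th iterate NDS `f^{[k]}`: its `n`-th map (0-indexed) is `f_{kn+1}^{k}`
in the paper's notation, i.e. the composition of `k` maps of `f` starting at index `k*n`. -/
def iterNDS (f : ℕ → X → X) (k : ℕ) : ℕ → X → X :=
  fun n => nComp f (k * n) k

/-- The product NDS `f^{[a]} = f^{[a 0]} × ⋯ × f^{[a (r-1)]}` on `Fin r → X`
for a vector `a : Fin r → ℕ`. -/
def vecIter (f : ℕ → X → X) {r : ℕ} (a : Fin r → ℕ) : ℕ → (Fin r → X) → Fin r → X :=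
  fun n x i => iterNDS f (a i) n (x i)

section Topo

variable [TopologicalSpace X]

/-- Topological transitivity of an NDS. -/
def NDSTransitive (f : ℕ → X → X) : Prop :=
  ∀ U V : Set X, IsOpen U → U.Nonempty → IsOpen V → V.Nonempty →
    ∃ n : ℕ, 1 ≤ n ∧ (nComp f 0 n '' U ∩ V).Nonempty

/-- Multi-transitivity of an NDS. -/
def MultiTransitive (f : ℕ → X → X) : Prop :=
  ∀ m : ℕ, 1 ≤ m → ∀ U V : Fin m → Set X,
    (∀ i, IsOpen (U i)) → (∀ i, (U i).Nonempty) →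
    (∀ i, IsOpen (V i)) → (∀ i, (V i).Nonempty) →
    ∃ l : ℕ, 1 ≤ l ∧ ∀ i : Fin m, (nComp f 0 ((i.1 + 1) * l) '' U i ∩ V i).Nonempty

/-- Multi-transitivity of an NDS with respect to a vector `a`. -/
def MultiTransWrt (f : ℕ → X → X) {p : ℕ} (a : Fin p → ℕ) : Prop :=
  ∀ U V : Fin p → Set X,
    (∀ i, IsOpen (U i)) → (∀ i, (U i).Nonempty) →
    (∀ i, IsOpen (V i)) → (∀ i, (V i).Nonempty) →
    ∃ l : ℕ, 1 ≤ l ∧ ∀ i : Fin p, (nComp f 0 (a i * l) '' U i ∩ V i).Nonempty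

/-- Strong multi-transitivity of an NDS: multi-transitivity with respect to every
vector of positive integers. -/
def StronglyMultiTransitive (f : ℕ → X → X) : Prop :=
  ∀ p : ℕ, 1 ≤ p → ∀ a : Fin p → ℕ, (∀ i, 1 ≤ a i) → MultiTransWrt f a

/-- Weak mixing of order `n` of an NDS. -/
def WeaklyMixingOfOrder (f : ℕ → X → X) (n : ℕ) : Prop :=
  ∀ U V : Fin n → Set X,
    (∀ i, IsOpen (U i)) → (∀ i, (U i).Nonempty) →
    (∀ i, IsOpen (V i)) → (∀ i, (V i).Nonempty) →
    ∃ m : ℕ, 1 ≤ m ∧ ∀ i : Fin n, (nComp f 0 m '' U i ∩ V i).Nonempty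

/-- Weak mixing of all orders of an NDS. -/
def WeaklyMixingAllOrders (f : ℕ → X → X) : Prop :=
  ∀ n : ℕ, 2 ≤ n → WeaklyMixingOfOrder f n

/-- Mild mixing of an NDS: the product with any transitive NDS (on a compact
metric space, with continuous maps) is transitive. -/
def MildlyMixing (f : ℕ → X → X) : Prop :=
  ∀ (Y : Type) [MetricSpace Y] [CompactSpace Y] (g : ℕ → Y → Y),
    (∀ n, Continuous (g n)) → NDSTransitive g →
      NDSTransitive (fun n (p : X × Y) => (f n p.1, g n p.2))

/-- Δ-transitivity of an NDS. -/
def DeltaTransitive (f : ℕ → X → X) : Prop :=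
  ∀ m : ℕ, 1 ≤ m → ∃ Y : Set X, Dense Y ∧ IsGδ Y ∧
    ∀ x ∈ Y, Dense {y : Fin m → X | ∃ n : ℕ, 1 ≤ n ∧ y = fun i => nComp f 0 ((i.1 + 1) * n) x}

/-- Δ-mixing of an NDS. -/
def DeltaMixing (f : ℕ → X → X) : Prop :=
  ∀ m : ℕ, 1 ≤ m → ∀ A : Set ℕ, A.Infinite → 0 ∉ A →
    ∃ Y : Set X, Dense Y ∧ IsGδ Y ∧
      ∀ x ∈ Y, Dense {y : Fin m → X | ∃ n ∈ A, y = fun i => nComp f 0 ((i.1 + 1) * n) x}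

/-- The set `N_{f_{1,∞}}(U,V)` of (positive) hitting times. -/
def hitTimes (f : ℕ → X → X) (U V : Set X) : Set ℕ :=
  {n : ℕ | 1 ≤ n ∧ (nComp f 0 n '' U ∩ V).Nonempty}

/-- A set of positive integers is syndetic if it has bounded gaps. -/
def Syndetic (A : Set ℕ) : Prop :=
  ∃ M : ℕ, ∀ i : ℕ, 1 ≤ i → ∃ j ∈ A, i ≤ j ∧ j ≤ i + M

/-- A set of positive integers is thick if it contains arbitrarily long runs. -/
def ThickSet (A : Set ℕ) : Prop :=
  ∀ p : ℕ, ∃ n : ℕ, 1 ≤ n ∧ ∀ j ≤ p, n + j ∈ A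

/-- A set of positive integers is thickly syndetic. -/
def ThicklySyndetic (A : Set ℕ) : Prop :=
  ∀ l : ℕ, Syndetic {m : ℕ | ∀ j ≤ l, m + j ∈ A}

/-- Thick transitivity of an NDS. -/
def ThicklyTransitive (f : ℕ → X → X) : Prop :=
  ∀ U V : Set X, IsOpen U → U.Nonempty → IsOpen V → V.Nonempty →
    ThickSet (hitTimes f U V)

/-- Thickly syndetic transitivity of an NDS. -/
def ThicklySyndeticallyTransitive (f : ℕ → X → X) : Prop :=
  ∀ U V : Set X, IsOpen U → U.Nonempty → IsOpen V → V.Nonempty →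
    ThicklySyndetic (hitTimes f U V)

/-- Total transitivity of an NDS: every iterate `f^{[n]}` is transitive. -/
def TotallyTransitive (f : ℕ → X → X) : Prop :=
  ∀ n : ℕ, 1 ≤ n → NDSTransitive (iterNDS f n)

/-- An NDS is feeble open if each map sends nonempty open sets to sets with
nonempty interior. -/
def FeebleOpen (f : ℕ → X → X) : Prop :=
  ∀ i : ℕ, ∀ U : Set X, IsOpen U → U.Nonempty → (interior (f i '' U)).Nonempty

/-- Strong multi-transitivity of an autonomous system `(X, g)`. -/
def ADSStronglyMultiTransitive (g : X → X) : Prop :=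
  ∀ m : ℕ, 1 ≤ m → ∀ a : Fin m → ℕ, (∀ j, 1 ≤ a j) →
    ∀ U V : Fin m → Set X,
      (∀ j, IsOpen (U j)) → (∀ j, (U j).Nonempty) →
      (∀ j, IsOpen (V j)) → (∀ j, (V j).Nonempty) →
      ∃ l : ℕ, 1 ≤ l ∧ ∀ j : Fin m, (g^[a j * l] '' U j ∩ V j).Nonempty

/-- Δ-transitivity of an autonomous system `(X, g)`. -/
def ADSDeltaTransitive (g : X → X) : Prop :=
  ∀ m : ℕ, 1 ≤ m → ∃ Y : Set X, Dense Y ∧ IsGδ Y ∧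
    ∀ x ∈ Y, Dense {y : Fin m → X | ∃ n : ℕ, 1 ≤ n ∧ y = fun i => g^[(i.1 + 1) * n] x}

/-- Thickly syndetic transitivity of an autonomous system `(X, g)`. -/
def ADSThicklySyndeticallyTransitive (g : X → X) : Prop :=
  ∀ U V : Set X, IsOpen U → U.Nonempty → IsOpen V → V.Nonempty →
    ThicklySyndetic {n : ℕ | 1 ≤ n ∧ (g^[n] '' U ∩ V).Nonempty}

end Topo

section MetricDefs

variable [MetricSpace X]

/-- The compositions `f_r^k` converge collectively to the iterates `g^k`. -/
def CollectiveConvergence (f : ℕ → X → X) (g : X → X) : Prop :=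
  ∀ ε : ℝ, 0 < ε → ∃ r₀ : ℕ, ∀ r ≥ r₀, ∀ k : ℕ, 1 ≤ k → ∀ x : X,
    dist (nComp f r k x) (g^[k] x) < ε

/-- Chain mixing of an NDS. -/
def NDSChainMixing (f : ℕ → X → X) : Prop :=
  ∀ x y : X, ∀ δ : ℝ, 0 < δ → ∃ N : ℕ, 1 ≤ N ∧ ∀ n ≥ N,
    ∃ c : ℕ → X, c 0 = x ∧ c n = y ∧ ∀ i < n, dist (f i (c i)) (c (i + 1)) < δ

/-- Chain transitivity of an NDS. -/
def NDSChainTransitive (f : ℕ → X → X) : Prop :=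
  ∀ x y : X, ∀ δ : ℝ, 0 < δ → ∃ n : ℕ, 1 ≤ n ∧
    ∃ c : ℕ → X, c 0 = x ∧ c n = y ∧ ∀ i < n, dist (f i (c i)) (c (i + 1)) < δ

/-- The shadowing property of an NDS. -/
def NDSShadowing (f : ℕ → X → X) : Prop :=
  ∀ ε : ℝ, 0 < ε → ∃ δ : ℝ, 0 < δ ∧ ∀ n : ℕ, ∀ c : ℕ → X,
    (∀ i < n, dist (f i (c i)) (c (i + 1)) < δ) →
      ∃ z : X, ∀ i ≤ n, dist (nComp f 0 i z) (c i) < ε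

end MetricDefs

end NDSDefs

/-!
Weak mixing of a product system only has to be tested on open boxes, that is, coordinate by
coordinate, so weak mixing of order `n` of `f^{[a 0]} × ⋯ × f^{[a (r-1)]}` is multi-transitivity of
`f` with respect to the vector `a` repeated `n` times. In particular, strong multi-transitivity
gives weak mixing of all orders. Conversely, a vector of length `p` with entries at most `k` embeds
into `p` copies of `(1, …, k)`: the `j`-th entry is found in the `j`-th copy, and the positions left
over are given the trivial open set `X`.
-/

section Composition

variable {X : Type*} (f : ℕ → X → X)

theorem nComp_add (i m n : ℕ) : nComp f i (m + n) = nComp f (i + m) n ∘ nComp f i m := by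
  induction n with
  | zero => rfl
  | succ n ih => rw [← Nat.add_assoc, nComp, ih, nComp, Function.comp_assoc, Nat.add_assoc]

theorem nComp_iterNDS (k i n : ℕ) : nComp (iterNDS f k) i n = nComp f (k * i) (k * n) := by
  induction n with
  | zero => rfl
  | succ n ih => rw [nComp, ih, Nat.mul_succ, nComp_add, iterNDS, Nat.mul_add]

theorem nComp_vecIter {r : ℕ} (a : Fin r → ℕ) (i n : ℕ) :
    nComp (vecIter f a) i n = Pi.map fun j => nComp f (a j * i) (a j * n) := by
  simp only [← nComp_iterNDS]
  induction n with
  | zero => rfl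
  | succ n ih => rw [nComp, ih]; rfl

theorem nComp_vecIter_image_univ_pi_inter_nonempty_iff {r : ℕ} (a : Fin r → ℕ) (n : ℕ)
    (U V : Fin r → Set X) :
    (nComp (vecIter f a) 0 n '' univ.pi U ∩ univ.pi V).Nonempty ↔
      ∀ j, (nComp f 0 (a j * n) '' U j ∩ V j).Nonempty := by
  simp only [nComp_vecIter, Nat.mul_zero, piMap_image_univ_pi, ← pi_inter_distrib,
    univ_pi_nonempty_iff]

end Composition

theorem exists_isOpen_nonempty_univ_pi_subset {ι : Type*} [Finite ι] {A : ι → Type*}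
    [∀ i, TopologicalSpace (A i)] {W : Set (∀ i, A i)} (hW : IsOpen W) (hne : W.Nonempty) :
    ∃ B : ∀ i, Set (A i), (∀ i, IsOpen (B i)) ∧ (∀ i, (B i).Nonempty) ∧ univ.pi B ⊆ W := by
  obtain ⟨x, hx⟩ := hne
  obtain ⟨B, hB, hBW⟩ := isOpen_pi_iff'.1 hW x hx
  exact ⟨B, fun i => (hB i).1, fun i => ⟨x i, (hB i).2⟩, hBW⟩

section MultiTransFamily

variable {X ι κ : Type*} [TopologicalSpace X] {f : ℕ → X → X}

/-- Multi-transitivity with respect to a family of exponents indexed by an arbitrary type. For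
`ι = Fin p` this is `MultiTransWrt`; other index types allow a vector to be repeated, indexing by
`Fin n × Fin r`, without renumbering its entries. -/
def MultiTransFamily (f : ℕ → X → X) (a : ι → ℕ) : Prop :=
  ∀ U V : ι → Set X,
    (∀ i, IsOpen (U i)) → (∀ i, (U i).Nonempty) →
    (∀ i, IsOpen (V i)) → (∀ i, (V i).Nonempty) →
    ∃ l : ℕ, 1 ≤ l ∧ ∀ i, (nComp f 0 (a i * l) '' U i ∩ V i).Nonempty

theorem MultiTransFamily.of_isEmpty [IsEmpty ι] {a : ι → ℕ} : MultiTransFamily f a :=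
  fun _ _ _ _ _ _ => ⟨1, le_rfl, isEmptyElim⟩

theorem MultiTransFamily.comp_injective {a : ι → ℕ} (h : MultiTransFamily f a) {σ : κ → ι}
    (hσ : σ.Injective) : MultiTransFamily f (a ∘ σ) := by
  rcases isEmpty_or_nonempty κ with _ | ⟨⟨j₀⟩⟩
  · exact .of_isEmpty
  · intro U V hU hUne hV hVne
    have : Nonempty X := (hUne j₀).to_type
    have extend_forall {P : Set X → Prop} {W : κ → Set X} (hW : ∀ j, P (W j)) (huniv : P univ)
        (i : ι) : P (Function.extend σ W (fun _ => univ) i) := by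
      by_cases hi : ∃ j, σ j = i
      · obtain ⟨j, rfl⟩ := hi
        simpa only [hσ.extend_apply] using hW j
      · simpa only [Function.extend_apply' _ _ _ hi] using huniv
    obtain ⟨l, hl, hit⟩ := h _ _ (extend_forall hU isOpen_univ) (extend_forall hUne univ_nonempty)
      (extend_forall hV isOpen_univ) (extend_forall hVne univ_nonempty)
    exact ⟨l, hl, fun j => by simpa only [hσ.extend_apply, Function.comp_apply] using hit (σ j)⟩

theorem StronglyMultiTransitive.multiTransFamily [Finite ι] (h : StronglyMultiTransitive f)
    {a : ι → ℕ} (ha : ∀ i, 1 ≤ a i) : MultiTransFamily f a := by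
  cases isEmpty_or_nonempty ι
  · exact .of_isEmpty
  · let e := Finite.equivFin ι
    have hfin : MultiTransFamily f (a ∘ e.symm) :=
      h _ Nat.card_pos (a ∘ e.symm) fun i => ha (e.symm i)
    simpa only [Function.comp_assoc, e.symm_comp_self, Function.comp_id] using
      hfin.comp_injective e.injective

theorem weaklyMixingOfOrder_vecIter_iff {r n : ℕ} {a : Fin r → ℕ} :
    WeaklyMixingOfOrder (vecIter f a) n ↔
      MultiTransFamily f fun q : Fin n × Fin r => a q.2 := by
  constructor
  · intro h U V hU hUne hV hVne
    obtain ⟨l, hl, hit⟩ := h (fun j => univ.pi fun i => U (j, i))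
      (fun j => univ.pi fun i => V (j, i))
      (fun j => isOpen_set_pi finite_univ fun i _ => hU (j, i))
      (fun j => univ_pi_nonempty_iff.2 fun i => hUne (j, i))
      (fun j => isOpen_set_pi finite_univ fun i _ => hV (j, i))
      (fun j => univ_pi_nonempty_iff.2 fun i => hVne (j, i))
    exact ⟨l, hl, fun ⟨j, i⟩ =>
      (nComp_vecIter_image_univ_pi_inter_nonempty_iff f a l _ _).1 (hit j) i⟩
  · intro h U V hU hUne hV hVne
    choose B hB hBne hBU using fun j => exists_isOpen_nonempty_univ_pi_subset (hU j) (hUne j)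
    choose C hC hCne hCV using fun j => exists_isOpen_nonempty_univ_pi_subset (hV j) (hVne j)
    obtain ⟨l, hl, hit⟩ := h (fun q => B q.1 q.2) (fun q => C q.1 q.2) (fun q => hB q.1 q.2)
      (fun q => hBne q.1 q.2) (fun q => hC q.1 q.2) (fun q => hCne q.1 q.2)
    refine ⟨l, hl, fun j => ?_⟩
    have hbox : (nComp (vecIter f a) 0 l '' univ.pi (B j) ∩ univ.pi (C j)).Nonempty :=
      (nComp_vecIter_image_univ_pi_inter_nonempty_iff f a l _ _).2 fun i => hit (j, i)
    exact hbox.mono (inter_subset_inter (image_mono (hBU j)) (hCV j))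

end MultiTransFamily

theorem stronglyMultiTransitive_iff_weaklyMixingAllOrders_general {X : Type*}
    [TopologicalSpace X] (f : ℕ → X → X) :
    StronglyMultiTransitive f ↔
      ∀ k : ℕ, 1 ≤ k → WeaklyMixingAllOrders (vecIter f (fun i : Fin k => i.1 + 1)) := by
  constructor
  · intro h k _ n _
    exact weaklyMixingOfOrder_vecIter_iff.2 (h.multiTransFamily fun q => Nat.le_add_left 1 q.2)
  · intro h p hp a ha
    obtain ⟨k, hk⟩ : ∃ k, ∀ j, a j ≤ k := (finite_range a).bddAbove.imp fun _ => forall_mem_range.1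
    have hkpos : 1 ≤ k := (ha ⟨0, hp⟩).trans (hk _)
    -- Weak mixing is only assumed for orders at least 2, hence `p + 1` copies instead of `p`.
    have hmix : MultiTransFamily f fun q : Fin (p + 1) × Fin k => q.2.1 + 1 :=
      weaklyMixingOfOrder_vecIter_iff.1 (h k hkpos (p + 1) (by lia))
    let σ : Fin p → Fin (p + 1) × Fin k := fun j =>
      (j.castSucc, ⟨a j - 1, Nat.sub_one_lt_of_le (ha j) (hk j)⟩)
    have hσ : σ.Injective := fun i j hij => Fin.castSucc_injective p (congrArg Prod.fst hij)
    have hσa : (fun q : Fin (p + 1) × Fin k => q.2.1 + 1) ∘ σ = a :=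
      funext fun j => Nat.sub_add_cancel (ha j)
    exact hσa ▸ hmix.comp_injective hσ

/-- an NDS is strongly multi-transitive iff for every `k`, the product NDS
`(X^k, f × f^{[2]} × ⋯ × f^{[k]})` is weakly mixing of all orders. -/
theorem stronglyMultiTransitive_iff_weaklyMixingAllOrders {X : Type*}
    [MetricSpace X] [CompactSpace X] (f : ℕ → X → X) (hf : ∀ n, Continuous (f n)) :
    StronglyMultiTransitive f ↔
      ∀ k : ℕ, 1 ≤ k → WeaklyMixingAllOrders (vecIter f (fun i : Fin k => i.1 + 1)) :=
  stronglyMultiTransitive_iff_weaklyMixingAllOrders_general f
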